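/- arXiv:math/0701309 — 2 statements merged into one kernel-verified Lean document; each statement's English description precedes it below -/
import Mathlib

section
/- With γ_i := γ'_i − Σ_j ε(γ'_i h_j) h*_j, one has d γ_i = α_i and ε(γ_i · z) = 0 for every cocycle z ∈ ker d. -/
namespace PDCDGA

variable {k : Type} [Field k]

/-- Graded commutativity with Koszul signs, together with the convention that
squares of odd-degree elements vanish (also in characteristic 2). -/
structure GradedComm {A : Type} [Ring A] [Algebra k A] (𝒜 : ℕ → Submodule k A) : Prop where
  mul_comm : ∀ (i j : ℕ) (a b : A), a ∈ 𝒜 i → b ∈ 𝒜 j →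
    a * b = ((-1 : k) ^ (i * j)) • (b * a)
  odd_sq : ∀ i : ℕ, Odd i → ∀ a ∈ 𝒜 i, a * a = 0

/-- A `k`-linear differential of degree `+1` satisfying the graded Leibniz rule. -/
structure IsDifferential {A : Type} [Ring A] [Algebra k A] (𝒜 : ℕ → Submodule k A)
    (d : A →ₗ[k] A) : Prop where
  grade : ∀ i : ℕ, ∀ a ∈ 𝒜 i, d a ∈ 𝒜 (i + 1)
  d_sq : ∀ a : A, d (d a) = 0
  leibniz : ∀ (i : ℕ) (a b : A), a ∈ 𝒜 i →
    d (a * b) = d a * b + ((-1 : k) ^ i) • (a * d b)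

/-- An orientation `ε : A → k`, concentrated in degree `n`, vanishing on boundaries
and inducing an epimorphism `Hⁿ(A) → k`. -/
structure IsOrientation {A : Type} [Ring A] [Algebra k A] (𝒜 : ℕ → Submodule k A)
    (d : A →ₗ[k] A) (n : ℕ) (ε : A →ₗ[k] k) : Prop where
  homog : ∀ i : ℕ, i ≠ n → ∀ a ∈ 𝒜 i, ε a = 0
  eps_d : ∀ a : A, ε (d a) = 0
  exists_cocycle : ∃ μ : A, μ ∈ 𝒜 n ∧ d μ = 0 ∧ ε μ = 1

/-- The orphan ideal `O = {a | ∀ b, ε (a·b) = 0}` (as a `k`-submodule). -/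
def Orphans {A : Type} [Ring A] [Algebra k A] (ε : A →ₗ[k] k) : Submodule k A :=
  ⨅ b : A, LinearMap.ker (ε ∘ₗ LinearMap.mulRight k b)

lemma mem_orphans {A : Type} [Ring A] [Algebra k A] (ε : A →ₗ[k] k) (a : A) :
    a ∈ Orphans ε ↔ ∀ b : A, ε (a * b) = 0 := by
  simp [Orphans]

/-- `H^*(A,d)` is a Poincaré duality algebra in dimension `n` with respect to the
orientation `ε`: every nonzero cohomology class pairs nontrivially with some class
in the complementary degree. -/
def CohomologyPD {A : Type} [Ring A] [Algebra k A] (𝒜 : ℕ → Submodule k A)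
    (d : A →ₗ[k] A) (n : ℕ) (ε : A →ₗ[k] k) : Prop :=
  ∀ (i : ℕ) (a : A), a ∈ 𝒜 i → d a = 0 → a ∉ LinearMap.range d →
    ∃ (j : ℕ) (b : A), i + j = n ∧ b ∈ 𝒜 j ∧ d b = 0 ∧ ε (a * b) ≠ 0

/-- The orphan ideal is `N`-half-acyclic: `Hⁱ(O) = 0` for `n/2 + 1 ≤ i ≤ N`
(the condition `n/2 + 1 ≤ i` is written as `n + 2 ≤ 2 * i`). -/
def OrphansHalfAcyclic {A : Type} [Ring A] [Algebra k A] (𝒜 : ℕ → Submodule k A)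
    (d : A →ₗ[k] A) (n : ℕ) (ε : A →ₗ[k] k) (N : ℕ) : Prop :=
  ∀ i : ℕ, n + 2 ≤ 2 * i → i ≤ N → ∀ a : A, a ∈ Orphans ε → a ∈ 𝒜 i → d a = 0 →
    ∃ b : A, b ∈ Orphans ε ∧ b ∈ 𝒜 (i - 1) ∧ a = d b

/-- A chain map is a quasi-isomorphism: it induces a bijection on cohomology. -/
def IsQuasiIso {A B : Type} [Ring A] [Algebra k A] [Ring B] [Algebra k B]
    (d : A →ₗ[k] A) (D : B →ₗ[k] B) (f : A → B) : Prop :=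
  (∀ a : A, d a = 0 → (∃ b : B, f a = D b) → ∃ a' : A, a = d a') ∧
  (∀ x : B, D x = 0 → ∃ (a : A) (b : B), d a = 0 ∧ x = f a + D b)

/-- Indices of the monomial basis of `Λ(c₁,…,c_l,w₁,…,w_l)`, where `c_i` has degree
`q+1` and `w_i` has degree `q`: exponents of odd-degree generators are at most 1. -/
def MonIdx (q l : ℕ) : Type :=
  {se : (Fin l → ℕ) × (Fin l → ℕ) //
    (Odd (q + 1) → ∀ i, se.1 i ≤ 1) ∧ (Odd q → ∀ i, se.2 i ≤ 1)}

/-- The monomial `c₁^{s₁} ⋯ c_l^{s_l} · w₁^{e₁} ⋯ w_l^{e_l}`. -/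
def monomial {B : Type} [Monoid B] {l : ℕ} (c w : Fin l → B)
    (μ : (Fin l → ℕ) × (Fin l → ℕ)) : B :=
  (((List.finRange l).map fun i => c i ^ μ.1 i).prod) *
    (((List.finRange l).map fun i => w i ^ μ.2 i).prod)

lemma d_proj {A : Type} [Ring A] [Algebra k A] (𝒜 : ℕ → Submodule k A) [GradedRing 𝒜]
    (d : A →ₗ[k] A) (hd : IsDifferential 𝒜 d) (j : ℕ) (z : A) :
    ((DirectSum.decompose 𝒜 (d z) (j + 1) : 𝒜 (j + 1)) : A)
      = d ((DirectSum.decompose 𝒜 z j : 𝒜 j) : A) := by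
  induction z using DirectSum.Decomposition.inductionOn 𝒜 with
  | zero => simp
  | @homogeneous i a =>
    by_cases hij : i = j
    · subst hij
      rw [DirectSum.decompose_of_mem_same 𝒜 (hd.grade i _ a.2),
        DirectSum.decompose_of_mem_same 𝒜 a.2]
    · rw [DirectSum.decompose_of_mem_ne 𝒜 (hd.grade i _ a.2) (by omega),
        DirectSum.decompose_of_mem_ne 𝒜 a.2 hij, map_zero]
  | add a b ha hb =>
    simp only [map_add, DirectSum.decompose_add, DirectSum.add_apply, Submodule.coe_add, ha, hb]

lemma eps_proj {A : Type} [Ring A] [Algebra k A] (𝒜 : ℕ → Submodule k A) [GradedRing 𝒜]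
    (d : A →ₗ[k] A) (n : ℕ) (ε : A →ₗ[k] k) (hor : IsOrientation 𝒜 d n ε)
    (i j : ℕ) (hij : i + j = n) (g : A) (hg : g ∈ 𝒜 i) (z : A) :
    ε (g * z) = ε (g * ((DirectSum.decompose 𝒜 z j : 𝒜 j) : A)) := by
  induction z using DirectSum.Decomposition.inductionOn 𝒜 with
  | zero => simp
  | @homogeneous p a =>
    by_cases hpj : p = j
    · subst hpj
      rw [DirectSum.decompose_of_mem_same 𝒜 a.2]
    · rw [DirectSum.decompose_of_mem_ne 𝒜 a.2 hpj, mul_zero, map_zero]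
      exact hor.homog (i + p) (by omega) _ (SetLike.mul_mem_graded hg a.2)
  | add a b ha hb =>
    simp only [mul_add, map_add, DirectSum.decompose_add, DirectSum.add_apply,
      Submodule.coe_add, ha, hb]

/-- with `γ_i := γ'_i − Σ_j ε(γ'_i h_j) h*_j` one has `d γ_i = α_i`
and `ε(γ_i · z) = 0` for every cocycle `z`.  Here the `h_j` are cocycles whose classes
form a basis of the cohomology in the degree `Dm` complementary to `Km = deg γ'_i`,
and the `h*_j` are dual cocycles with `ε(h*_a h_b) = δ_{ab}`. -/
theorem gamma_dual_orthogonal {k A : Type} [Field k] [Ring A] [Algebra k A]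
    (𝒜 : ℕ → Submodule k A) [GradedRing 𝒜]
    (d : A →ₗ[k] A) (n : ℕ) (ε : A →ₗ[k] k)
    (hgc : GradedComm 𝒜) (hd : IsDifferential 𝒜 d)
    (hconn : ∀ a ∈ 𝒜 0, ∃ r : k, a = r • (1 : A))
    (hft : ∀ i : ℕ, FiniteDimensional k (𝒜 i))
    (hor : IsOrientation 𝒜 d n ε) (hpd : CohomologyPD 𝒜 d n ε)
    (l m Km Dm : ℕ) (hdeg : Km + Dm = n)
    (α : Fin l → A) (hαm : ∀ i, α i ∈ 𝒜 (Km + 1)) (hαz : ∀ i, d (α i) = 0)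
    (hαo : ∀ i, α i ∈ Orphans ε)
    (γ' : Fin l → A) (hγ'm : ∀ i, γ' i ∈ 𝒜 Km) (hγ'd : ∀ i, d (γ' i) = α i)
    (h : Fin m → A) (hhm : ∀ jj, h jj ∈ 𝒜 Dm) (hhz : ∀ jj, d (h jj) = 0)
    (hbasis : ∀ z ∈ 𝒜 Dm, d z = 0 →
      ∃ cf : Fin m → k, z - ∑ jj, cf jj • h jj ∈ LinearMap.range d)
    (hstar : Fin m → A) (hsm : ∀ jj, hstar jj ∈ 𝒜 Km) (hsz : ∀ jj, d (hstar jj) = 0)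
    (hdual : ∀ a b : Fin m, ε (hstar a * h b) = if a = b then 1 else 0) :
    ∀ i : Fin l,
      d (γ' i - ∑ jj, ε (γ' i * h jj) • hstar jj) = α i ∧
      (∀ z : A, d z = 0 →
        ε ((γ' i - ∑ jj, ε (γ' i * h jj) • hstar jj) * z) = 0) := by
  intro i
  have hdγ : d (γ' i - ∑ jj, ε (γ' i * h jj) • hstar jj) = α i := by
    simp [map_sub, map_sum, hsz, hγ'd]
  have hγm : (γ' i - ∑ jj, ε (γ' i * h jj) • hstar jj) ∈ 𝒜 Km :=
    Submodule.sub_mem _ (hγ'm i)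
      (Submodule.sum_mem _ fun jj _ => Submodule.smul_mem _ _ (hsm jj))
  have hγh : ∀ b, ε ((γ' i - ∑ jj, ε (γ' i * h jj) • hstar jj) * h b) = 0 := by
    intro b
    simp [sub_mul, Finset.sum_mul, hdual]
  refine ⟨hdγ, fun z hz => ?_⟩
  generalize (γ' i - ∑ jj, ε (γ' i * h jj) • hstar jj) = g at hdγ hγm hγh ⊢
  rw [eps_proj 𝒜 d n ε hor Km Dm hdeg g hγm z]
  have hz' : d ((DirectSum.decompose 𝒜 z Dm : 𝒜 Dm) : A) = 0 := by
    rw [← d_proj 𝒜 d hd, hz]; simp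
  obtain ⟨cf, w, hw⟩ := hbasis _ (DirectSum.decompose 𝒜 z Dm).2 hz'
  rw [eq_add_of_sub_eq hw.symm, mul_add, map_add]
  have h1 : ε (g * d w) = 0 := by
    have h2 := hor.eps_d (g * w)
    rw [hd.leibniz Km g w hγm, map_add, hdγ, (mem_orphans ε _).1 (hαo i) w, zero_add,
      map_smul, smul_eq_mul] at h2
    exact (mul_eq_zero.1 h2).resolve_left (pow_ne_zero _ (neg_ne_zero.2 one_ne_zero))
  rw [h1, zero_add, Finset.mul_sum, map_sum]
  refine Finset.sum_eq_zero fun b _ => ?_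
  rw [mul_smul_comm, map_smul, hγh, smul_zero]

end PDCDGA
end

section
/- If k ≥ n/2 + 2 and the orphan ideal O of (A,d,ε) is (k−1)-half-acyclic (H^i(O) = 0 for n/2+1 ≤ i ≤ k−1), then the orphan ideal Ô of (Â,d̂,ε̂) is k-half-acyclic. -/
namespace PDCDGA

variable {k : Type} [Field k]

lemma prod_pow_single {B : Type} [Monoid B] {l : ℕ} (c : Fin l → B) (s : Fin l) :
    ((List.finRange l).map fun i => c i ^ (Pi.single s 1 : Fin l → ℕ) i).prod = c s := by
  have key : ∀ L : List (Fin l), L.Nodup →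
      (L.map fun i => c i ^ (Pi.single s 1 : Fin l → ℕ) i).prod = if s ∈ L then c s else 1 := by
    intro L
    induction L with
    | nil => intro _; simp
    | cons a L ih =>
      intro h
      rw [List.nodup_cons] at h
      rw [List.map_cons, List.prod_cons, ih h.2]
      by_cases hs : s = a
      · subst hs
        simp [h.1]
      · have : a ≠ s := fun h => hs h.symm
        simp [Pi.single_apply, hs, this]
  rw [key _ (List.nodup_finRange l)]
  simp

lemma prod_pow_zero {B : Type} [Monoid B] {l : ℕ} (c : Fin l → B) (m : Fin l → ℕ)
    (hm : m = 0) :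
    ((List.finRange l).map fun i => c i ^ m i).prod = 1 := by
  subst hm
  simp

lemma exists_single {l : ℕ} (m : Fin l → ℕ) (h : ∑ i, m i = 1) :
    ∃ s, m = Pi.single s 1 := by
  have h0 : ∃ s, m s ≠ 0 := by
    by_contra! hc
    simp [hc] at h
  obtain ⟨s, hs⟩ := h0
  refine ⟨s, ?_⟩
  have h3 := Finset.add_sum_erase Finset.univ m (Finset.mem_univ s)
  have h4 : ∑ x ∈ Finset.univ.erase s, m x = 0 := by omega
  rw [Finset.sum_eq_zero_iff] at h4
  funext i
  by_cases hi : i = s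
  · subst hi
    simp; omega
  · simp [Pi.single_apply, hi]
    exact h4 i (by simp [hi])

lemma monomial_class {k B : Type} [Field k] [Ring B] [Algebra k B]
    (ℬ : ℕ → Submodule k B) [GradedRing ℬ] (q l : ℕ) (c w : Fin l → B)
    (hcm : ∀ i, c i ∈ ℬ (q + 1)) (hwm : ∀ i, w i ∈ ℬ q)
    (μ : (Fin l → ℕ) × (Fin l → ℕ)) :
    ∃ e, monomial c w μ ∈ ℬ e ∧ ((e = 0 ∧ monomial c w μ = 1) ∨
      (e = q + 1 ∧ ∃ s, monomial c w μ = c s) ∨ (e = q ∧ ∃ s, monomial c w μ = w s) ∨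
      2 * q ≤ e) := by
  obtain ⟨u, v⟩ := μ
  refine ⟨(∑ i, u i) * (q + 1) + (∑ i, v i) * q, ?_, ?_⟩
  · unfold monomial
    apply SetLike.mul_mem_graded
    · rw [Finset.sum_mul, Fin.sum_univ_def]
      apply SetLike.list_prod_map_mem_graded
      intro i _
      exact SetLike.pow_mem_graded _ (hcm i)
    · rw [Finset.sum_mul, Fin.sum_univ_def]
      apply SetLike.list_prod_map_mem_graded
      intro i _
      exact SetLike.pow_mem_graded _ (hwm i)
  · rcases Nat.lt_or_ge (∑ i, u i + ∑ i, v i) 2 with h | h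
    · have hz : ∀ m : Fin l → ℕ, ∑ i, m i = 0 → m = 0 := by
        intro m hm
        rw [Finset.sum_eq_zero_iff] at hm
        funext i
        exact hm i (Finset.mem_univ i)
      have h3 : (∑ i, u i = 0 ∧ ∑ i, v i = 0) ∨ (∑ i, u i = 1 ∧ ∑ i, v i = 0) ∨
        (∑ i, u i = 0 ∧ ∑ i, v i = 1) := by omega
      rcases h3 with ⟨hu, hv⟩ | ⟨hu, hv⟩ | ⟨hu, hv⟩
      · left
        refine ⟨by rw [hu, hv]; simp, ?_⟩
        unfold monomial
        rw [prod_pow_zero c u (hz u hu), prod_pow_zero w v (hz v hv), one_mul]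
      · right; left
        refine ⟨by rw [hu, hv]; simp, ?_⟩
        obtain ⟨s, rfl⟩ := exists_single u hu
        refine ⟨s, ?_⟩
        unfold monomial
        rw [prod_pow_zero w v (hz v hv), mul_one]
        exact prod_pow_single c s
      · right; right; left
        refine ⟨by rw [hu, hv]; simp, ?_⟩
        obtain ⟨s, rfl⟩ := exists_single v hv
        refine ⟨s, ?_⟩
        unfold monomial
        rw [prod_pow_zero c u (hz u hu), one_mul]
        exact prod_pow_single w s
    · right; right; right
      have h5 := Nat.mul_le_mul_right q h
      nlinarith [Nat.zero_le (∑ i, u i)]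

lemma decompose_map {k A B : Type} [Field k] [Ring A] [Algebra k A] [Ring B] [Algebra k B]
    (𝒜 : ℕ → Submodule k A) [GradedRing 𝒜] (ℬ : ℕ → Submodule k B) [GradedRing ℬ]
    (j : A →ₐ[k] B) (hjgr : ∀ i : ℕ, ∀ a ∈ 𝒜 i, j a ∈ ℬ i) (a : A) (i : ℕ) :
    ((DirectSum.decompose ℬ (j a) i : ℬ i) : B) = j ((DirectSum.decompose 𝒜 a i : 𝒜 i) : A) := by
  induction a using DirectSum.Decomposition.inductionOn 𝒜 with
  | zero => simp
  | @homogeneous t m =>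
    have h := hjgr t m m.2
    by_cases hti : t = i
    · subst hti
      rw [DirectSum.decompose_of_mem_same ℬ h, DirectSum.decompose_of_mem_same 𝒜 m.2]
    · rw [DirectSum.decompose_of_mem_ne ℬ h hti, DirectSum.decompose_of_mem_ne 𝒜 m.2 hti, map_zero]
  | add m m' h h' => simp [DirectSum.decompose_add, h, h']

lemma decompose_d {k A : Type} [Field k] [Ring A] [Algebra k A]
    (𝒜 : ℕ → Submodule k A) [GradedRing 𝒜] (d : A →ₗ[k] A) (hdA : IsDifferential 𝒜 d)
    (a : A) (i : ℕ) :
    ((DirectSum.decompose 𝒜 (d a) (i + 1) : 𝒜 (i + 1)) : A) =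
      d ((DirectSum.decompose 𝒜 a i : 𝒜 i) : A) := by
  induction a using DirectSum.Decomposition.inductionOn 𝒜 with
  | zero => simp
  | @homogeneous t m =>
    have h := hdA.grade t m m.2
    by_cases hti : t = i
    · subst hti
      rw [DirectSum.decompose_of_mem_same 𝒜 h, DirectSum.decompose_of_mem_same 𝒜 m.2]
    · rw [DirectSum.decompose_of_mem_ne 𝒜 h (by omega), DirectSum.decompose_of_mem_ne 𝒜 m.2 hti,
        map_zero]
  | add m m' h h' => simp [DirectSum.decompose_add, h, h']

lemma free_indep {k A B : Type} [Field k] [Ring A] [Algebra k A] [Ring B] [Algebra k B]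
    (q l : ℕ) (j : A →ₐ[k] B) (c w : Fin l → B)
    (hfree : ∀ x : B, ∃! f : MonIdx q l →₀ A,
      (f.sum fun μ a => j a * monomial c w μ.1) = x)
    (a : A) (r : Fin l → A) (h : j a + ∑ s, j (r s) * c s = 0) : a = 0 ∧ ∀ s, r s = 0 := by
  classical
  let i0 : MonIdx q l := ⟨(0, 0), by simp⟩
  have hle : ∀ s i : Fin l, (Pi.single s 1 : Fin l → ℕ) i ≤ 1 := by
    intro s i
    by_cases hi : i = s <;> simp [Pi.single_apply, hi]
  let ic : Fin l → MonIdx q l := fun s => ⟨(Pi.single s 1, 0), by simp [hle]⟩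
  have m0 : monomial c w i0.1 = 1 := by simp [i0, monomial]
  have mc : ∀ s, monomial c w (ic s).1 = c s := by
    intro s
    show (((List.finRange l).map fun i => c i ^ (Pi.single s 1 : Fin l → ℕ) i).prod) *
      (((List.finRange l).map fun i => w i ^ (0 : Fin l → ℕ) i).prod) = c s
    rw [prod_pow_zero w 0 rfl, mul_one, prod_pow_single]
  let f : MonIdx q l →₀ A := Finsupp.single i0 a + ∑ s, Finsupp.single (ic s) (r s)
  have hsum : (f.sum fun μ a => j a * monomial c w μ.1) = 0 := by
    let L : (MonIdx q l →₀ A) →+ B := Finsupp.liftAddHom fun μ =>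
      (AddMonoidHom.mulRight (monomial c w μ.1)).comp (j : A →+ B)
    have hL : ∀ g : MonIdx q l →₀ A, (g.sum fun μ a => j a * monomial c w μ.1) = L g := by
      intro g; rfl
    have hLs : ∀ (μ : MonIdx q l) (a : A), L (Finsupp.single μ a) = j a * monomial c w μ.1 := by
      intro μ a
      simp [L]
    rw [hL, map_add, map_sum, hLs, m0, mul_one]
    simp only [hLs, mc]
    exact h
  have hf : f = 0 := (hfree 0).unique hsum (by simp)
  have hne : ∀ s, ic s ≠ i0 := by
    intro s hs
    have h1 := congrArg (fun x : MonIdx q l => x.1.1 s) hs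
    simp [ic, i0] at h1
  have hinj : ∀ s t, ic s = ic t → s = t := by
    intro s t hs
    by_contra hst
    have h1 := congrArg (fun x : MonIdx q l => x.1.1 s) hs
    simp [ic, hst] at h1
  constructor
  · have h1 := DFunLike.congr_fun hf i0
    simpa [f, Finsupp.finsetSum_apply, Finsupp.single_apply, hne] using h1
  · intro s
    have h1 := DFunLike.congr_fun hf (ic s)
    have h2 : ∀ t, (ic t = ic s) ↔ t = s := fun t => ⟨hinj t s, fun h => by rw [h]⟩
    simpa [f, Finsupp.finsetSum_apply, Finsupp.single_apply, (hne s).symm, h2] using h1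

lemma orphan_criterion {k A B : Type} [Field k] [Ring A] [Algebra k A] [Ring B] [Algebra k B]
    (𝒜 : ℕ → Submodule k A) [GradedRing 𝒜] (ℬ : ℕ → Submodule k B) [GradedRing ℬ]
    (n q l : ℕ) (E : B →ₗ[k] k)
    (hconn : ∀ a ∈ 𝒜 0, ∃ r : k, a = r • (1 : A))
    (j : A →ₐ[k] B) (hjgr : ∀ i : ℕ, ∀ a ∈ 𝒜 i, j a ∈ ℬ i)
    (c w : Fin l → B) (hcm : ∀ i, c i ∈ ℬ (q + 1)) (hwm : ∀ i, w i ∈ ℬ q)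
    (hfree : ∀ x : B, ∃! f : MonIdx q l →₀ A,
      (f.sum fun μ a => j a * monomial c w μ.1) = x)
    (hEhom : ∀ m : ℕ, m ≠ n → ∀ x ∈ ℬ m, E x = 0)
    (m : ℕ) (hq : n ≤ 2 * q) (hm : n ≤ m + q) (hm1 : 1 ≤ m) (y : B) (hy : y ∈ ℬ m)
    (hyj : ∀ a, E (y * j a) = 0) (hyw : m + q = n → ∀ s, E (y * w s) = 0) :
    y ∈ Orphans E := by
  rw [mem_orphans]
  intro x
  obtain ⟨f, rfl, -⟩ := hfree x
  rw [Finsupp.sum, Finset.mul_sum, map_sum]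
  apply Finset.sum_eq_zero
  intro μ _
  obtain ⟨e, he, hcl⟩ := monomial_class ℬ q l c w hcm hwm μ.1
  generalize f μ = a
  generalize monomial c w μ.1 = M at he hcl
  by_cases h0 : M = 1
  · rw [h0, mul_one]; exact hyj a
  induction a using DirectSum.Decomposition.inductionOn 𝒜 with
  | zero => simp
  | @homogeneous t a =>
    have hmem : y * (j a * M) ∈ ℬ (m + (t + e)) :=
      SetLike.mul_mem_graded hy (SetLike.mul_mem_graded (hjgr t a a.2) he)
    by_cases hdeg : m + (t + e) = n
    · rcases hcl with ⟨_, h⟩ | ⟨h, _⟩ | ⟨h, s, hs⟩ | h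
      · exact absurd h h0
      · omega
      · have ht : t = 0 := by omega
        subst ht
        obtain ⟨r, hr⟩ := hconn a a.2
        rw [hr, map_smul, map_one, hs, smul_mul_assoc, one_mul, mul_smul_comm, map_smul,
          hyw (by omega) s, smul_zero]
      · omega
    · exact hEhom _ hdeg _ hmem
  | add a a' h h' => rw [map_add, add_mul, mul_add, map_add, h, h', add_zero]

lemma low_degree {k A B : Type} [Field k] [Ring A] [Algebra k A] [Ring B] [Algebra k B]
    (𝒜 : ℕ → Submodule k A) [GradedRing 𝒜] (ℬ : ℕ → Submodule k B) [GradedRing ℬ]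
    (d : A →ₗ[k] A) (D : B →ₗ[k] B) (q l : ℕ)
    (hdA : IsDifferential 𝒜 d) (hdB : IsDifferential ℬ D)
    (hconn : ∀ a ∈ 𝒜 0, ∃ r : k, a = r • (1 : A))
    (h1 : 𝒜 1 = ⊥) (h2 : ∀ a ∈ 𝒜 2, d a = 0)
    (j : A →ₐ[k] B) (hjgr : ∀ i : ℕ, ∀ a ∈ 𝒜 i, j a ∈ ℬ i)
    (hjch : ∀ a : A, D (j a) = j (d a))
    (c w : Fin l → B) (hcm : ∀ i, c i ∈ ℬ (q + 1)) (hwm : ∀ i, w i ∈ ℬ q)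
    (hfree : ∀ x : B, ∃! f : MonIdx q l →₀ A,
      (f.sum fun μ a => j a * monomial c w μ.1) = x)
    (hq : 3 ≤ q) (i : ℕ) (hi : i ≤ q + 2) (x : B) (hx : x ∈ ℬ i) :
    ∃ (a : A) (cf : Fin l → k) (r : Fin l → A), a ∈ 𝒜 i ∧ (i ≠ q + 1 → cf = 0) ∧
      (∀ s, D (j (r s) * w s) = j (r s) * D (w s)) ∧
      x = j a + ∑ s, cf s • c s + ∑ s, j (r s) * w s := by
  classical
  obtain ⟨f, hf, -⟩ := hfree x
  have hxe : x = ∑ μ ∈ f.support,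
      ((DirectSum.decompose ℬ (j (f μ) * monomial c w μ.1) i : ℬ i) : B) := by
    conv_lhs => rw [← DirectSum.decompose_of_mem_same ℬ hx, ← hf, Finsupp.sum]
    rw [DirectSum.decompose_sum, DFinsupp.finsetSum_apply, Submodule.coe_sum]
  rw [hxe]
  have d1 : d 1 = 0 := by
    have h := hdA.leibniz 0 1 1 SetLike.GradedOne.one_mem
    simpa using h
  apply Finset.sum_induction _ (fun x => ∃ (a : A) (cf : Fin l → k) (r : Fin l → A), a ∈ 𝒜 i ∧
      (i ≠ q + 1 → cf = 0) ∧ (∀ s, D (j (r s) * w s) = j (r s) * D (w s)) ∧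
      x = j a + ∑ s, cf s • c s + ∑ s, j (r s) * w s)
  · rintro x y ⟨a, cf, r, h1, h2, h3, rfl⟩ ⟨a', cf', r', h1', h2', h3', rfl⟩
    refine ⟨a + a', cf + cf', r + r', add_mem h1 h1', ?_, ?_, ?_⟩
    · intro h; rw [h2 h, h2' h, add_zero]
    · intro s
      simp only [Pi.add_apply, map_add, add_mul, h3, h3']
    · simp only [Pi.add_apply, map_add, add_mul, add_smul, Finset.sum_add_distrib]
      abel
  · exact ⟨0, 0, 0, by simp, by simp, by simp, by simp⟩
  · intro μ _
    obtain ⟨e, he, hcl⟩ := monomial_class ℬ q l c w hcm hwm μ.1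
    generalize f μ = a
    generalize monomial c w μ.1 = M at he hcl
    by_cases hei : e ≤ i
    · rw [DirectSum.coe_decompose_mul_of_right_mem_of_le ℬ he hei,
        decompose_map 𝒜 ℬ j hjgr]
      have hb : ((DirectSum.decompose 𝒜 a (i - e) : 𝒜 (i - e)) : A) ∈ 𝒜 (i - e) := Subtype.prop _
      generalize ((DirectSum.decompose 𝒜 a (i - e) : 𝒜 (i - e)) : A) = b at hb
      rcases hcl with ⟨h, hM⟩ | ⟨h, s, hs⟩ | ⟨h, s, hs⟩ | h
      · subst h
        exact ⟨b, 0, 0, hb, by simp, by simp, by simp [hM]⟩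
      · have : i - e = 0 ∨ i - e = 1 := by omega
        rcases this with h' | h'
        · rw [h'] at hb
          obtain ⟨t, rfl⟩ := hconn b hb
          refine ⟨0, Pi.single s t, 0, by simp, fun hne => by omega, by simp, ?_⟩
          simp [hs, Pi.single_apply, ite_smul]
        · rw [h', h1, Submodule.mem_bot] at hb
          exact ⟨0, 0, 0, by simp, by simp, by simp, by simp [hb]⟩
      · refine ⟨0, 0, Pi.single s b, by simp, by simp, ?_, ?_⟩
        · intro s'
          by_cases hss : s' = s
          · subst hss
            rw [Pi.single_eq_same, hdB.leibniz (i - e) _ _ (hjgr _ b hb), hjch]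
            have : i - e = 0 ∨ i - e = 1 ∨ i - e = 2 := by omega
            rcases this with h' | h' | h'
            · rw [h'] at hb ⊢
              obtain ⟨t, rfl⟩ := hconn b hb
              simp [d1]
            · rw [h', h1, Submodule.mem_bot] at hb
              simp [hb]
            · rw [h'] at hb ⊢
              simp [h2 b hb]
          · simp [Pi.single_apply, hss]
        · have h6 : ∑ t, j ((Pi.single s b : Fin l → A) t) * w t = j b * w s := by
            rw [Finset.sum_eq_single s]
            · simp
            · intro t _ ht
              simp [ht]
            · simp
          rw [h6, hs]
          simp
      · omega
    · rw [DirectSum.coe_decompose_mul_of_right_mem_of_not_le ℬ he hei]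
      exact ⟨0, 0, 0, by simp, by simp, by simp, by simp⟩

/-- if `k ≥ n/2 + 2` (with `k = q + 2`) and the orphan ideal `O` of
`(A,d,ε)` is `(k−1)`-half-acyclic, then the orphan ideal `Ô` of `(Â,d̂,ε̂)` is
`k`-half-acyclic. -/
theorem half_acyclicity_extends {k A B : Type} [Field k] [Ring A] [Algebra k A] [Ring B] [Algebra k B]
    (𝒜 : ℕ → Submodule k A) [GradedRing 𝒜] (ℬ : ℕ → Submodule k B) [GradedRing ℬ]
    (d : A →ₗ[k] A) (D : B →ₗ[k] B) (n q l : ℕ)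
    (ε : A →ₗ[k] k) (E : B →ₗ[k] k)
    (hgcA : GradedComm 𝒜) (hdA : IsDifferential 𝒜 d)
    (hgcB : GradedComm ℬ) (hdB : IsDifferential ℬ D)
    (hft : ∀ i : ℕ, FiniteDimensional k (𝒜 i))
    (hconn : ∀ a ∈ 𝒜 0, ∃ r : k, a = r • (1 : A))
    (h1 : 𝒜 1 = ⊥) (h2 : ∀ a ∈ 𝒜 2, d a = 0)
    (hn : 7 ≤ n) (hk : n + 2 ≤ 2 * (q + 2))
    (hor : IsOrientation 𝒜 d n ε) (hpd : CohomologyPD 𝒜 d n ε)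
    (α γ : Fin l → A)
    (hαm : ∀ i, α i ∈ 𝒜 (q + 2)) (hαz : ∀ i, d (α i) = 0) (hαo : ∀ i, α i ∈ Orphans ε)
    (hspan : ∀ a : A, a ∈ Orphans ε → a ∈ 𝒜 (q + 2) → d a = 0 →
      ∃ (b : A) (cf : Fin l → k), b ∈ Orphans ε ∧ b ∈ 𝒜 (q + 1) ∧ a = d b + ∑ i, cf i • α i)
    (hind : ∀ (cf : Fin l → k) (b : A), b ∈ Orphans ε → b ∈ 𝒜 (q + 1) →
      (∑ i, cf i • α i) = d b → ∀ i, cf i = 0)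
    (hγm : ∀ i, γ i ∈ 𝒜 (q + 1)) (hγd : ∀ i, d (γ i) = α i)
    (hγperp : ∀ (i : Fin l) (z : A), d z = 0 → ε (γ i * z) = 0)
    (T Z : Submodule k A)
    (hT : IsCompl T (LinearMap.range d)) (hγT : ∀ i, γ i ∈ T)
    (hZo : Z ≤ Orphans ε)
    (hZdisj : Z ⊓ (Orphans ε ⊓ LinearMap.range d) = ⊥)
    (hZsup : Z ⊔ (Orphans ε ⊓ LinearMap.range d) = Orphans ε)
    (hZT : Z ≤ T)
    (hZgr : ∀ z ∈ Z, ∀ i : ℕ, ((DirectSum.decompose 𝒜 z i : 𝒜 i) : A) ∈ Z)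
    (j : A →ₐ[k] B) (hjgr : ∀ i : ℕ, ∀ a ∈ 𝒜 i, j a ∈ ℬ i)
    (hjch : ∀ a : A, D (j a) = j (d a))
    (c w : Fin l → B) (hcm : ∀ i, c i ∈ ℬ (q + 1)) (hwm : ∀ i, w i ∈ ℬ q)
    (hDc : ∀ i, D (c i) = j (α i)) (hDw : ∀ i, D (w i) = c i - j (γ i))
    (hcase : CharZero k ∨ Odd (q + 2))
    (hfree : ∀ x : B, ∃! f : MonIdx q l →₀ A,
      (f.sum fun μ a => j a * monomial c w μ.1) = x)
    (hEj : ∀ a : A, E (j a) = ε a)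
    (hEwd : ∀ (i : Fin l) (ξ : A), E (w i * j (d ξ)) = ((-1 : k) ^ (q + 2)) * ε (γ i * ξ))
    (hEcc : ∀ i i' : Fin l, E (c i * c i') = - ε (γ i * γ i'))
    (hEw : ∀ i : Fin l, E (w i) = 0)
    (hEwT : ∀ (i : Fin l) (t : A), t ∈ T → E (w i * j t) = 0)
    (hEc : ∀ i : Fin l, E (c i) = 0)
    (hEcj : ∀ (i : Fin l) (ξ : A), E (c i * j ξ) = 0)
    (hEccj : ∀ (i i' : Fin l) (ξ : A), E (c i * c i' * j ξ) = 0)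
    (hEcw : ∀ i i' : Fin l, E (c i * w i') = 0)
    (hEcwj : ∀ (i i' : Fin l) (ξ : A), E (c i * w i' * j ξ) = 0)
    (hEww : ∀ i i' : Fin l, E (w i * w i') = 0)
    (hEwwj : ∀ (i i' : Fin l) (ξ : A), E (w i * w i' * j ξ) = 0)
    (hEhom : ∀ m : ℕ, m ≠ n → ∀ x ∈ ℬ m, E x = 0)
    (hk2 : n + 4 ≤ 2 * (q + 2))
    (hha : OrphansHalfAcyclic 𝒜 d n ε (q + 1)) :
    OrphansHalfAcyclic ℬ D n E (q + 2) := by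
  have hq3 : 3 ≤ q := by omega
  have hq : n ≤ 2 * q := by omega
  intro i hni hi x hxo hxm hDx
  rw [mem_orphans] at hxo
  obtain ⟨a, cf, r, ham, hcf, hDr, rfl⟩ := low_degree 𝒜 ℬ d D q l hdA hdB hconn h1 h2 j hjgr
    hjch c w hcm hwm hfree hq3 i hi x hxm
  have hD0 : j (d a + ∑ s, cf s • α s - ∑ s, r s * γ s) + ∑ s, j (r s) * c s = 0 := by
    rw [← hDx]
    simp only [map_add, map_sub, map_sum, map_smul, map_mul, hDr, hjch, hDc, hDw, mul_sub,
      Finset.sum_sub_distrib]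
    abel
  obtain ⟨hda, hr⟩ := free_indep q l j c w hfree _ r hD0
  simp only [hr, map_zero, zero_mul, Finset.sum_const_zero, sub_zero, add_zero] at hda hxo ⊢
  have hao : a ∈ Orphans ε := by
    rw [mem_orphans]
    intro b
    have h := hxo (j b)
    rw [add_mul, ← map_mul, map_add, hEj, Finset.sum_mul, map_sum, Finset.sum_eq_zero,
      add_zero] at h
    · exact h
    · intro s _
      rw [smul_mul_assoc, map_smul, hEcj, smul_zero]
  have hcf0 : cf = 0 := by
    by_cases h : i = q + 1
    · subst h
      funext s
      refine hind cf (-a) (neg_mem hao) (neg_mem ham) ?_ s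
      rw [map_neg]
      exact eq_neg_of_add_eq_zero_right hda
    · exact hcf h
  subst hcf0
  simp only [Pi.zero_apply, zero_smul, Finset.sum_const_zero, add_zero] at hda ⊢
  have hjO : ∀ m : ℕ, n ≤ m + q → 1 ≤ m → ∀ b ∈ 𝒜 m, b ∈ Orphans ε →
      (m + q = n → b ∈ T) → j b ∈ Orphans E := by
    intro m hm hm1 b hb hbo hbT
    refine orphan_criterion 𝒜 ℬ n q l E hconn j hjgr c w hcm hwm hfree hEhom m hq hm hm1 _
      (hjgr m b hb) ?_ ?_
    · intro y
      rw [← map_mul, hEj]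
      exact (mem_orphans ε b).1 hbo y
    · intro h s
      rw [hgcB.mul_comm m q _ _ (hjgr m b hb) (hwm s), map_smul, hEwT s b (hbT h), smul_zero]
  by_cases hiq : i = q + 2
  · subst hiq
    obtain ⟨b, cf, hbo, hbm, hab⟩ := hspan a hao ham hda
    refine ⟨j b + ∑ s, cf s • c s, ?_, ?_, ?_⟩
    · refine add_mem (hjO (q + 1) (by omega) (by omega) b hbm hbo (by omega)) ?_
      refine sum_mem fun s _ => Submodule.smul_mem _ _ ?_
      exact orphan_criterion 𝒜 ℬ n q l E hconn j hjgr c w hcm hwm hfree hEhom (q + 1) hq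
        (by omega) (by omega) _ (hcm s) (hEcj s) (by omega)
    · exact add_mem (hjgr _ b hbm) (sum_mem fun s _ => Submodule.smul_mem _ _ (hcm s))
    · rw [hab]
      simp only [map_add, map_sum, map_smul, hjch, hDc]
  · obtain ⟨b, hbo, hbm, hab⟩ := hha i hni (by omega) a hao ham hda
    have hb' := hbo
    rw [← hZsup, Submodule.mem_sup] at hb'
    obtain ⟨z, hz, y, hy, hzy⟩ := hb'
    obtain ⟨ξ, hξ⟩ := hy.2
    have hdz : d z = a := by
      rw [hab, ← hzy, map_add, ← hξ, hdA.d_sq, add_zero]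
    obtain ⟨m, rfl⟩ : ∃ m, i = m + 1 := ⟨i - 1, by omega⟩
    have hz' := hZgr z hz m
    refine ⟨j ((DirectSum.decompose 𝒜 z m : 𝒜 m) : A), ?_, ?_, ?_⟩
    · exact hjO m (by omega) (by omega) _ (Subtype.prop _) (hZo hz') (fun _ => hZT hz')
    · exact hjgr m _ (Subtype.prop _)
    · rw [hjch, ← decompose_d 𝒜 d hdA z m, hdz, DirectSum.decompose_of_mem_same 𝒜 ham]


end PDCDGA
end
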